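/- The topological entropy is lower semicontinuous at every ergodic toral automorphism in the C^1 topology. Precisely: let A ∈ GL(d,ℤ) be ergodic. For every ε > 0 there exists η > 0 such that for every C^1, ℤ^d-periodic map g : ℝ^d → ℝ^d with ‖g‖_{C^1} < η for which F(v) := A v + g(v) is a C^1 diffeomorphism of ℝ^d, the induced homeomorphism f : 𝕋^d → 𝕋^d (with f ∘ π = π ∘ F) satisfies h_top(f) ≥ h_top(T_A) − ε. -/

import Mathlib

open Filter

namespace Paper

/-- The real matrix associated to an integer matrix. -/
noncomputable def matR {d : ℕ} (A : Matrix (Fin d) (Fin d) ℤ) : Matrix (Fin d) (Fin d) ℝ :=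
  A.map (fun n => (n : ℝ))

/-- The complex matrix associated to an integer matrix. -/
noncomputable def matC {d : ℕ} (A : Matrix (Fin d) (Fin d) ℤ) : Matrix (Fin d) (Fin d) ℂ :=
  A.map (fun n => (n : ℂ))

/-- `A` is ergodic: no complex eigenvalue of `A` is a root of unity. -/
def IsErgodicMatrix {d : ℕ} (A : Matrix (Fin d) (Fin d) ℤ) : Prop :=
  ∀ z : ℂ, (matC A).charpoly.IsRoot z → ∀ k : ℕ, 0 < k → z ^ k ≠ 1

/-- A lattice vector, i.e. an integer vector viewed in `ℝ^d`. -/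
def latVec {d : ℕ} (m : Fin d → ℤ) : Fin d → ℝ := fun i => (m i : ℝ)

/-- The quotient (pseudo)metric on the torus `𝕋^d = ℝ^d/ℤ^d`, computed on
representatives: `d(π u, π w) = inf_{m ∈ ℤ^d} ‖u - w - m‖` for a fixed norm on `ℝ^d`. -/
noncomputable def distQ {d : ℕ} (u w : Fin d → ℝ) : ℝ :=
  ⨅ m : Fin d → ℤ, ‖u - w - latVec m‖



/-- The dynamical distance `d_n(x,y) = max_{0 ≤ j < n} ρ(f^j x, f^j y)`. -/
noncomputable def dynDist {X : Type*} (ρ : X → X → ℝ) (f : X → X) (n : ℕ) (x y : X) : ℝ :=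
  ⨆ j : Fin n, ρ (f^[(j : ℕ)] x) (f^[(j : ℕ)] y)

/-- `S` is `(n,ε)`-separated for `f` with respect to the (pseudo)metric `ρ`. -/
def IsSeparated {X : Type*} (ρ : X → X → ℝ) (f : X → X) (n : ℕ) (ε : ℝ) (S : Finset X) : Prop :=
  ∀ x ∈ S, ∀ y ∈ S, x ≠ y → ε < dynDist ρ f n x y

/-- `N(f,n,ε)`: the maximal cardinality of an `(n,ε)`-separated set. -/
noncomputable def sepNum {X : Type*} (ρ : X → X → ℝ) (f : X → X) (n : ℕ) (ε : ℝ) : ℕ :=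
  sSup {k | ∃ S : Finset X, IsSeparated ρ f n ε S ∧ S.card = k}

/-- The topological entropy
`h_top(f) = lim_{ε→0⁺} limsup_{n→∞} (1/n) log N(f,n,ε)`; since `N(f,n,ε)` is
antitone in `ε`, the limit as `ε → 0⁺` equals the supremum over `ε > 0`. -/
noncomputable def topEnt {X : Type*} (ρ : X → X → ℝ) (f : X → X) : ℝ :=
  ⨆ ε : {e : ℝ // 0 < e},
    Filter.limsup (fun n : ℕ => Real.log (sepNum ρ f n ε) / n) Filter.atTop


/-- The vectors whose orbit under `f` grows at most like `r ^ k`. -/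
def growthSpace {𝕜 V : Type*} [NormedField 𝕜] [NormedAddCommGroup V] [NormedSpace 𝕜 V]
    (f : Module.End 𝕜 V) (r : ℝ) : Submodule 𝕜 V where
  carrier := {x | ∃ C : ℝ, ∀ k : ℕ, ‖(f ^ k) x‖ ≤ C * r ^ k}
  zero_mem' := ⟨0, fun k => by simp⟩
  add_mem' := by
    rintro x y ⟨C, hC⟩ ⟨D, hD⟩
    refine ⟨C + D, fun k => ?_⟩
    rw [map_add, add_mul]
    exact (norm_add_le _ _).trans (add_le_add (hC k) (hD k))
  smul_mem' := by
    rintro c x ⟨C, hC⟩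
    refine ⟨‖c‖ * C, fun k => ?_⟩
    rw [map_smul, norm_smul, mul_assoc]
    exact mul_le_mul_of_nonneg_left (hC k) (norm_nonneg c)

theorem mem_growthSpace {𝕜 V : Type*} [NormedField 𝕜] [NormedAddCommGroup V] [NormedSpace 𝕜 V]
    {f : Module.End 𝕜 V} {r : ℝ} {x : V} :
    x ∈ growthSpace f r ↔ ∃ C : ℝ, ∀ k : ℕ, ‖(f ^ k) x‖ ≤ C * r ^ k :=
  Iff.rfl

/-- A generalized eigenvector for `z` grows slower than `r ^ k` as soon as `‖z‖ < r`. -/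
theorem mem_growthSpace_of_pow_sub_apply_eq_zero {𝕜 V : Type*} [NormedField 𝕜]
    [NormedAddCommGroup V] [NormedSpace 𝕜 V] (f : Module.End 𝕜 V) (z : 𝕜) {r : ℝ}
    (hz : ‖z‖ < r) (m : ℕ) :
    ∀ x : V, ((f - z • (1 : Module.End 𝕜 V)) ^ m) x = 0 → x ∈ growthSpace f r := by
  induction m with
  | zero =>
    intro x hx
    have : x = 0 := by simpa using hx
    rw [this]
    exact Submodule.zero_mem _
  | succ m ih =>
    intro x hx
    rw [pow_succ, Module.End.mul_apply] at hx
    obtain ⟨C, hC⟩ := ih _ hx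
    have hr : 0 ≤ r := (norm_nonneg z).trans hz.le
    have hr' : 0 < r - ‖z‖ := sub_pos.mpr hz
    refine ⟨max ‖x‖ (C / (r - ‖z‖)), fun k => ?_⟩
    set D := max ‖x‖ (C / (r - ‖z‖))
    have hD : C ≤ D * (r - ‖z‖) := (div_le_iff₀ hr').mp (le_max_right _ _)
    induction k with
    | zero =>
      rw [pow_zero, pow_zero, mul_one, Module.End.one_apply]
      exact le_max_left _ _
    | succ k ihk =>
      have hsplit : (f ^ (k + 1)) x
          = z • (f ^ k) x + (f ^ k) ((f - z • (1 : Module.End 𝕜 V)) x) := by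
        simp [pow_succ]
      have hk := hC k
      rw [hsplit]
      calc ‖z • (f ^ k) x + (f ^ k) ((f - z • (1 : Module.End 𝕜 V)) x)‖
          ≤ ‖z‖ * ‖(f ^ k) x‖ + C * r ^ k := by
            refine (norm_add_le _ _).trans (add_le_add (norm_smul_le _ _) hk)
        _ ≤ ‖z‖ * (D * r ^ k) + (D * (r - ‖z‖)) * r ^ k := by
            gcongr
        _ = D * r ^ (k + 1) := by ring

/-- A complex automorphism splits the space into a part growing slower than any `μ ^ k`
with `μ > 1` and a part contracted exponentially by the inverse. -/
theorem exists_growthSpace_sup_eq_top {V : Type*} [NormedAddCommGroup V] [NormedSpace ℂ V]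
    [FiniteDimensional ℂ V] (f h : Module.End ℂ V) (hfh : f * h = 1) (hhf : h * f = 1) :
    ∃ ρ : ℝ, 0 < ρ ∧ ρ < 1 ∧ ∀ μ : ℝ, 1 < μ →
      growthSpace h ρ ⊔ growthSpace f μ = ⊤ := by
  have hfin : (spectrum ℂ f).Finite := Module.End.finite_spectrum f
  have hev : ∀ᶠ ρ in nhdsWithin (1 : ℝ) (Set.Iio 1),
      ∀ z ∈ spectrum ℂ f, 1 < ‖z‖ → ‖z‖⁻¹ < ρ := by
    rw [Filter.eventually_all_finite hfin]
    intro z _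
    by_cases hz : 1 < ‖z‖
    · have : ‖z‖⁻¹ < 1 := inv_lt_one_of_one_lt₀ hz
      filter_upwards [nhdsWithin_le_nhds (lt_mem_nhds this)] with ρ hρ _ using hρ
    · exact Filter.Eventually.of_forall fun ρ h => absurd h hz
  have hpos : ∀ᶠ ρ in nhdsWithin (1 : ℝ) (Set.Iio 1), (0 : ℝ) < ρ :=
    nhdsWithin_le_nhds (lt_mem_nhds one_pos)
  obtain ⟨ρ, ⟨hρz, hρ⟩, hρ1⟩ := ((hev.and hpos).and self_mem_nhdsWithin).exists
  refine ⟨ρ, hρ, hρ1, fun μ hμ => ?_⟩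
  rw [eq_top_iff, ← Module.End.iSup_maxGenEigenspace_eq_top f]
  refine iSup_le fun z x hx => ?_
  obtain ⟨m, hm⟩ := (Module.End.mem_maxGenEigenspace f z x).mp hx
  by_cases hx0 : x = 0
  · rw [hx0]
    exact Submodule.zero_mem _
  have hspec : z ∈ spectrum ℂ f := by
    rw [← Module.End.hasUnifEigenvalue_iff_mem_spectrum,
      ← Module.End.hasUnifEigenvalue_iff_hasUnifEigenvalue_one (k := ⊤) (by simp)]
    intro hbot
    rw [Module.End.maxGenEigenspace, hbot] at hx
    exact hx0 (by simpa using hx)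
  by_cases hz : 1 < ‖z‖
  · refine Submodule.mem_sup_left ?_
    have hz0 : z ≠ 0 := norm_pos_iff.mp (by linarith)
    refine mem_growthSpace_of_pow_sub_apply_eq_zero h z⁻¹
      (by rw [norm_inv]; exact hρz z hspec hz) m x ?_
    have hcomm : Commute h (f - z • (1 : Module.End ℂ V)) :=
      Commute.sub_right (hhf.trans hfh.symm) ((Commute.one_right h).smul_right z)
    have hfac : h - z⁻¹ • (1 : Module.End ℂ V)
        = ((-z⁻¹) • h) * (f - z • (1 : Module.End ℂ V)) := by
      rw [mul_sub, smul_mul_assoc, hhf, smul_mul_smul_comm, mul_one, neg_mul, inv_mul_cancel₀ hz0]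
      module
    rw [hfac, (hcomm.smul_left _).mul_pow, Module.End.mul_apply, hm, map_zero]
  · exact Submodule.mem_sup_right
      (mem_growthSpace_of_pow_sub_apply_eq_zero f z (by linarith) m x hm)

theorem growthSpace_apply_mem_of_commute {V : Type*} [NormedAddCommGroup V] [NormedSpace ℝ V]
    [FiniteDimensional ℝ V] {f h : Module.End ℝ V} (hc : Commute f h) {r : ℝ} {x : V}
    (hx : x ∈ growthSpace f r) : h x ∈ growthSpace f r := by
  obtain ⟨C, hC⟩ := hx
  refine ⟨‖LinearMap.toContinuousLinearMap h‖ * C, fun k => ?_⟩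
  have : (f ^ k) (h x) = h ((f ^ k) x) := LinearMap.congr_fun (hc.pow_left k) x
  rw [this, mul_assoc]
  exact (ContinuousLinearMap.le_opNorm (LinearMap.toContinuousLinearMap h) _).trans
    (mul_le_mul_of_nonneg_left (hC k) (norm_nonneg _))

/-- Growth bounds are uniform along a linear map into a growth space. -/
theorem exists_norm_pow_apply_le {ι V : Type*} [Fintype ι] [NormedAddCommGroup V]
    [NormedSpace ℝ V] (f : Module.End ℝ V) {r : ℝ} (R : (ι → ℝ) →ₗ[ℝ] V)
    (hR : ∀ x, R x ∈ growthSpace f r) :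
    ∃ C : ℝ, ∀ (k : ℕ) (x : ι → ℝ), ‖(f ^ k) (R x)‖ ≤ C * r ^ k * ‖x‖ := by
  classical
  choose C hC using fun i => mem_growthSpace.mp (hR (Pi.single i 1))
  refine ⟨∑ i, C i, fun k x => ?_⟩
  have hx : (f ^ k) (R x) = ∑ i, x i • (f ^ k) (R (Pi.single i 1)) := by
    conv_lhs => rw [pi_eq_sum_univ' x]
    simp [map_sum]
  rw [hx, Finset.sum_mul, Finset.sum_mul]
  refine norm_sum_le_of_le _ fun i _ => ?_
  rw [norm_smul, mul_comm]
  exact mul_le_mul (hC i k) (norm_le_pi_norm x i) (norm_nonneg _) ((norm_nonneg _).trans (hC i k))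

theorem disjoint_growthSpace {d : ℕ} {a b : Module.End ℝ (Fin d → ℝ)} (hab : a * b = 1)
    (hba : b * a = 1) {ρ μ : ℝ} (hρ : 0 ≤ ρ) (hμ : 0 ≤ μ) (hρμ : ρ * μ < 1) :
    Disjoint (growthSpace b ρ) (growthSpace a μ) := by
  rw [Submodule.disjoint_def]
  rintro x ⟨C, hC⟩ hxa
  obtain ⟨W, hW⟩ := Submodule.exists_isCompl (growthSpace a μ)
  obtain ⟨K, hK⟩ := exists_norm_pow_apply_le a _ (Submodule.projection_apply_mem hW)
  have hcomm : Commute a b := hab.trans hba.symm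
  have hpow : ∀ k : ℕ, a ^ k * b ^ k = 1 := fun k => by rw [← hcomm.mul_pow, hab, one_pow]
  have hbound : ∀ k : ℕ, ‖x‖ ≤ (|K| * C) * (ρ * μ) ^ k := by
    intro k
    have hmem : (b ^ k) x ∈ growthSpace a μ :=
      growthSpace_apply_mem_of_commute (hcomm.pow_right k) hxa
    have h1 := hK k ((b ^ k) x)
    rw [Submodule.projection_apply_of_mem_left hW hmem, ← Module.End.mul_apply, hpow,
      Module.End.one_apply] at h1
    calc ‖x‖ ≤ K * μ ^ k * ‖(b ^ k) x‖ := h1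
      _ ≤ |K| * μ ^ k * ‖(b ^ k) x‖ := by gcongr; exact le_abs_self K
      _ ≤ |K| * μ ^ k * (C * ρ ^ k) := by gcongr; exact hC k
      _ = (|K| * C) * (ρ * μ) ^ k := by rw [mul_pow]; ring
  have hlim : Tendsto (fun k : ℕ => (|K| * C) * (ρ * μ) ^ k) atTop (nhds 0) := by
    simpa using (tendsto_pow_atTop_nhds_zero_of_lt_one (mul_nonneg hρ hμ) hρμ).const_mul (|K| * C)
  exact norm_le_zero_iff.mp (ge_of_tendsto' hlim hbound)

theorem re_matC_pow_apply {d : ℕ} (A : Matrix (Fin d) (Fin d) ℤ) (k : ℕ) (p : Fin d → ℂ) :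
    ((Matrix.toLin' (matR A)) ^ k) (fun i => (p i).re)
      = fun i => (((Matrix.toLin' (matC A)) ^ k) p i).re := by
  induction k with
  | zero => simp
  | succ k ih =>
    rw [pow_succ', pow_succ', Module.End.mul_apply, Module.End.mul_apply, ih]
    ext i
    simp [Matrix.mulVec, dotProduct, matR, matC]

theorem re_mem_growthSpace {d : ℕ} (A : Matrix (Fin d) (Fin d) ℤ) {r : ℝ}
    {p : Fin d → ℂ} (hp : p ∈ growthSpace (Matrix.toLin' (matC A)) r) :
    (fun i => (p i).re) ∈ growthSpace (Matrix.toLin' (matR A)) r := by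
  obtain ⟨C, hC⟩ := hp
  refine ⟨C, fun k => le_trans ?_ (hC k)⟩
  rw [re_matC_pow_apply]
  refine (pi_norm_le_iff_of_nonneg (norm_nonneg _)).mpr fun i => ?_
  exact (Complex.abs_re_le_norm _).trans (norm_le_pi_norm _ i)

/-- The data of a splitting of `ℝ^d` by a projection `P` commuting with the automorphism `a`
(with inverse `b`), such that `b` contracts the range of `P` at rate `ρ` and `a` expands the
kernel of `P` at rate at most `μ`. -/
structure IsDominated {d : ℕ} (a b P : Module.End ℝ (Fin d → ℝ)) (ρ μ K : ℝ) : Prop where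
  mul_inv : a * b = 1
  inv_mul : b * a = 1
  comm : Commute a P
  idem : P * P = P
  one_le : 1 ≤ K
  unstable : ∀ (k : ℕ) (x : Fin d → ℝ), ‖(b ^ k) (P x)‖ ≤ K * ρ ^ k * ‖x‖
  centerStable : ∀ (k : ℕ) (x : Fin d → ℝ), ‖(a ^ k) (x - P x)‖ ≤ K * μ ^ k * ‖x‖

theorem toLin'_map_mul_eq_one {d : ℕ} {S : Type*} [CommRing S] {M N : Matrix (Fin d) (Fin d) ℤ}
    (h : M * N = 1) :
    Matrix.toLin' (M.map fun n => (n : S)) * Matrix.toLin' (N.map fun n => (n : S)) = 1 := by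
  have h1 : (M.map fun n => (n : S)) * (N.map fun n => (n : S)) = 1 := by
    have h2 : (M * N).map (Int.castRingHom S) = 1 := by
      rw [h, Matrix.map_one _ (map_zero _) (map_one _)]
    rw [Matrix.map_mul] at h2
    exact h2
  rw [Module.End.mul_eq_comp, ← Matrix.toLin'_mul, h1, Matrix.toLin'_one]
  rfl

theorem growthSpace_sup_eq_top_of_complex {d : ℕ} {A B : Matrix (Fin d) (Fin d) ℤ} {ρ μ : ℝ}
    (h : growthSpace (Matrix.toLin' (matC B)) ρ ⊔ growthSpace (Matrix.toLin' (matC A)) μ = ⊤) :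
    growthSpace (Matrix.toLin' (matR B)) ρ ⊔ growthSpace (Matrix.toLin' (matR A)) μ = ⊤ := by
  rw [eq_top_iff]
  intro x _
  have hx : (fun i => (x i : ℂ)) ∈ (⊤ : Submodule ℂ (Fin d → ℂ)) := Submodule.mem_top
  rw [← h] at hx
  obtain ⟨p, hp, q, hq, hpq⟩ := Submodule.mem_sup.mp hx
  refine Submodule.mem_sup.mpr ⟨_, re_mem_growthSpace B hp, _, re_mem_growthSpace A hq, ?_⟩
  ext i
  have := congrArg Complex.re (congrFun hpq i)
  simpa using this

theorem exists_isDominated_of_isCompl {d : ℕ} {a b : Module.End ℝ (Fin d → ℝ)} {ρ μ : ℝ}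
    (hab : a * b = 1) (hba : b * a = 1) (hρ : 0 ≤ ρ) (hμ : 0 ≤ μ)
    (hcompl : IsCompl (growthSpace b ρ) (growthSpace a μ)) :
    ∃ P K, IsDominated a b P ρ μ K := by
  obtain ⟨P, hPmem, hQmem, hPself, hPzero⟩ : ∃ P : Module.End ℝ (Fin d → ℝ),
      (∀ x, P x ∈ growthSpace b ρ) ∧ (∀ x, x - P x ∈ growthSpace a μ) ∧
      (∀ x ∈ growthSpace b ρ, P x = x) ∧ ∀ x ∈ growthSpace a μ, P x = 0 :=
    ⟨Submodule.projection _ _ hcompl, Submodule.projection_apply_mem hcompl,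
      fun x => Submodule.projection_eq_self_sub_projection hcompl x ▸
        Submodule.projection_apply_mem hcompl.symm x,
      fun x hx => Submodule.projection_apply_of_mem_left hcompl hx,
      fun x hx => (Submodule.projection_apply_eq_zero_iff hcompl).mpr hx⟩
  obtain ⟨K₁, hK₁⟩ := exists_norm_pow_apply_le b P hPmem
  obtain ⟨K₂, hK₂⟩ := exists_norm_pow_apply_le a (LinearMap.id - P) fun x => by
    rw [LinearMap.sub_apply, LinearMap.id_apply]
    exact hQmem x
  have hcomm : Commute a P := by
    refine LinearMap.ext fun x => ?_
    have h1 : P (a (P x)) = a (P x) :=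
      hPself _ (growthSpace_apply_mem_of_commute (hba.trans hab.symm) (hPmem x))
    have h2 : P (a (x - P x)) = 0 :=
      hPzero _ (growthSpace_apply_mem_of_commute (Commute.refl a) (hQmem x))
    rw [map_sub, map_sub, h1, sub_eq_zero] at h2
    exact h2.symm
  have hidem : P * P = P := LinearMap.ext fun x => hPself _ (hPmem x)
  simp only [LinearMap.sub_apply, LinearMap.id_apply] at hK₂
  have hK₁' : K₁ ≤ max 1 (max K₁ K₂) := (le_max_left _ _).trans (le_max_right _ _)
  have hK₂' : K₂ ≤ max 1 (max K₁ K₂) := (le_max_right _ _).trans (le_max_right _ _)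
  exact ⟨P, max 1 (max K₁ K₂), hab, hba, hcomm, hidem, le_max_left _ _,
    fun k x => (hK₁ k x).trans (by gcongr), fun k x => (hK₂ k x).trans (by gcongr)⟩

theorem exists_isDominated {d : ℕ} (A : Matrix (Fin d) (Fin d) ℤ)
    (hdet : A.det = 1 ∨ A.det = -1) :
    ∃ b : Module.End ℝ (Fin d → ℝ), ∃ ρ : ℝ, 0 < ρ ∧ ρ < 1 ∧ ∀ μ : ℝ, 1 < μ → ρ * μ < 1 →
      ∃ P K, IsDominated (Matrix.toLin' (matR A)) b P ρ μ K := by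
  have hunit : IsUnit A.det := by rcases hdet with h | h <;> simp [h]
  have hAB := Matrix.mul_nonsing_inv A hunit
  have hBA := Matrix.nonsing_inv_mul A hunit
  obtain ⟨ρ, hρ, hρ1, hsup⟩ := exists_growthSpace_sup_eq_top (Matrix.toLin' (matC A))
    (Matrix.toLin' (matC A⁻¹)) (toLin'_map_mul_eq_one hAB) (toLin'_map_mul_eq_one hBA)
  refine ⟨Matrix.toLin' (matR A⁻¹), ρ, hρ, hρ1, fun μ hμ hρμ => ?_⟩
  have hμ0 : 0 ≤ μ := by linarith
  have hab : Matrix.toLin' (matR A) * Matrix.toLin' (matR A⁻¹) = 1 := toLin'_map_mul_eq_one hAB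
  have hba : Matrix.toLin' (matR A⁻¹) * Matrix.toLin' (matR A) = 1 := toLin'_map_mul_eq_one hBA
  exact exists_isDominated_of_isCompl hab hba hρ.le hμ0
    ⟨disjoint_growthSpace hab hba hρ.le hμ0 hρμ,
      codisjoint_iff.mpr (growthSpace_sup_eq_top_of_complex (hsup μ hμ))⟩

/-- The Green kernel of the recursion `x (j + 1) = a (x j) + y j` attached to a splitting by `P`. -/
def greenKernel {d : ℕ} (a b P : Module.End ℝ (Fin d → ℝ)) (j i : ℕ) :
    Module.End ℝ (Fin d → ℝ) :=
  if i < j then a ^ (j - 1 - i) * (1 - P) else -(b ^ (i + 1 - j) * P)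

theorem greenKernel_succ_apply {d : ℕ} {a b P : Module.End ℝ (Fin d → ℝ)} {ρ μ K : ℝ}
    (h : IsDominated a b P ρ μ K) (j i : ℕ) (x : Fin d → ℝ) :
    greenKernel a b P (j + 1) i x = a (greenKernel a b P j i x) + if i = j then x else 0 := by
  have hinv : ∀ y, a (b y) = y := fun y => LinearMap.congr_fun h.mul_inv y
  rcases lt_trichotomy i j with hij | rfl | hij
  · obtain ⟨k, rfl⟩ : ∃ k, j = i + k + 1 := ⟨j - i - 1, by omega⟩
    simp only [greenKernel, show i < i + k + 1 + 1 by omega, show i < i + k + 1 by omega,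
      show i ≠ i + k + 1 by omega, if_true, if_false, add_zero,
      show i + k + 1 + 1 - 1 - i = k + 1 by omega, show i + k + 1 - 1 - i = k by omega, pow_succ',
      Module.End.mul_apply]
  · simp [greenKernel, hinv, sub_eq_neg_add]
  · obtain ⟨k, rfl⟩ : ∃ k, i = j + k + 1 := ⟨i - j - 1, by omega⟩
    simp only [greenKernel, show ¬ j + k + 1 < j + 1 by omega, show ¬ j + k + 1 < j by omega,
      show j + k + 1 ≠ j by omega, if_false, add_zero,
      show j + k + 1 + 1 - (j + 1) = k + 1 by omega,
      show j + k + 1 + 1 - j = k + 2 by omega, pow_succ' b (k + 1), LinearMap.neg_apply,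
      Module.End.mul_apply, map_neg, hinv]

theorem proj_greenKernel_apply {d : ℕ} {a b P : Module.End ℝ (Fin d → ℝ)} {ρ μ K : ℝ}
    (h : IsDominated a b P ρ μ K) {j i : ℕ} (hij : i < j) (x : Fin d → ℝ) :
    P (greenKernel a b P j i x) = 0 := by
  have hz : P * (a ^ (j - 1 - i) * (1 - P)) = 0 := by
    rw [← mul_assoc, ← (h.comm.pow_left _).eq, mul_assoc, mul_sub, mul_one, h.idem, sub_self,
      mul_zero]
  rw [greenKernel, if_pos hij]
  exact LinearMap.congr_fun hz x

/-- The scalar weights dominating the Green kernel. -/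
noncomputable def geomWeight (θ : ℝ) (j i : ℕ) : ℝ :=
  if i < j then θ ^ (j - 1 - i) else θ ^ (i - j)

theorem sum_geomWeight_le {θ : ℝ} (hθ : 0 ≤ θ) (hθ1 : θ < 1) (j n : ℕ) :
    ∑ i ∈ Finset.range n, geomWeight θ j i ≤ 2 / (1 - θ) := by
  have hgeom : ∀ m : ℕ, ∑ i ∈ Finset.range m, θ ^ i ≤ (1 - θ)⁻¹ := fun m => by
    rw [← tsum_geometric_of_lt_one hθ hθ1]
    exact (summable_geometric_of_lt_one hθ hθ1).sum_le_tsum _ fun i _ => pow_nonneg hθ i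
  have hnn : ∀ i, 0 ≤ geomWeight θ j i := fun i => by
    unfold geomWeight
    split_ifs <;> positivity
  have hleft : ∑ i ∈ Finset.range j, geomWeight θ j i = ∑ i ∈ Finset.range j, θ ^ i := by
    rw [← Finset.sum_range_reflect (fun i => θ ^ i)]
    exact Finset.sum_congr rfl fun i hi => if_pos (Finset.mem_range.mp hi)
  have hright : ∑ i ∈ Finset.range n, geomWeight θ j (j + i) = ∑ i ∈ Finset.range n, θ ^ i :=
    Finset.sum_congr rfl fun i _ => by simp [geomWeight]
  calc ∑ i ∈ Finset.range n, geomWeight θ j i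
      ≤ ∑ i ∈ Finset.range (j + n), geomWeight θ j i :=
        Finset.sum_le_sum_of_subset_of_nonneg
          (Finset.range_subset_range.mpr (by omega)) fun i _ _ => hnn i
    _ = ∑ i ∈ Finset.range j, θ ^ i + ∑ i ∈ Finset.range n, θ ^ i := by
        rw [Finset.sum_range_add, hleft, hright]
    _ ≤ (1 - θ)⁻¹ + (1 - θ)⁻¹ := add_le_add (hgeom _) (hgeom _)
    _ = 2 / (1 - θ) := by ring

theorem norm_greenKernel_apply_le {d : ℕ} {a b P : Module.End ℝ (Fin d → ℝ)} {ρ μ K ν θ : ℝ}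
    (h : IsDominated a b P ρ μ K) (hρ : 0 ≤ ρ) (hρ1 : ρ ≤ 1) (hμ : 0 ≤ μ) (hν : 1 ≤ ν)
    (hμν : μ ≤ θ * ν) (hρν : ρ * ν ≤ θ) (j i : ℕ) (x : Fin d → ℝ) :
    ‖greenKernel a b P j i x‖ * ν ^ i ≤ ν ^ j * (K * geomWeight θ j i) * ‖x‖ := by
  have hK : 0 ≤ K := zero_le_one.trans h.one_le
  have hν0 : 0 ≤ ν := zero_le_one.trans hν
  have hθ : 0 ≤ θ := (mul_nonneg hρ hν0).trans hρν
  by_cases hij : i < j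
  · obtain ⟨k, rfl⟩ : ∃ k, j = i + k + 1 := ⟨j - i - 1, by omega⟩
    simp only [greenKernel, geomWeight, if_pos hij, show i + k + 1 - 1 - i = k by omega]
    calc ‖(a ^ k * (1 - P)) x‖ * ν ^ i ≤ K * μ ^ k * ‖x‖ * ν ^ i := by
          gcongr
          exact h.centerStable k x
      _ ≤ K * (θ * ν) ^ k * ‖x‖ * ν ^ i := by gcongr
      _ = ν ^ (i + k) * (K * θ ^ k) * ‖x‖ := by rw [mul_pow, pow_add]; ring
      _ ≤ ν ^ (i + k + 1) * (K * θ ^ k) * ‖x‖ := by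
          gcongr ?_ * _ * _
          exact pow_le_pow_right₀ hν (Nat.le_succ _)
  · obtain ⟨k, rfl⟩ : ∃ k, i = j + k := ⟨i - j, by omega⟩
    simp only [greenKernel, geomWeight, if_neg hij, show j + k + 1 - j = k + 1 by omega,
      show j + k - j = k by omega]
    calc ‖(-(b ^ (k + 1) * P)) x‖ * ν ^ (j + k) ≤ K * ρ ^ (k + 1) * ‖x‖ * ν ^ (j + k) := by
          gcongr
          rw [LinearMap.neg_apply, norm_neg]
          exact h.unstable (k + 1) x
      _ = ν ^ j * (K * ((ρ * ν) ^ k * ρ)) * ‖x‖ := by rw [mul_pow, pow_add, pow_succ]; ring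
      _ ≤ ν ^ j * (K * (θ ^ k * 1)) * ‖x‖ := by gcongr
      _ = ν ^ j * (K * θ ^ k) * ‖x‖ := by rw [mul_one]

/-- Given a dominated splitting, a small Lipschitz bounded perturbation of `a` has, for each
vector `w` in the range of `P` and each `n`, an orbit starting near `w` whose `n`-th point projects
to `a ^ n w`. -/
theorem exists_proj_iterate_eq {d : ℕ} {a b P : Module.End ℝ (Fin d → ℝ)} {ρ μ K ν θ : ℝ}
    (h : IsDominated a b P ρ μ K) (hρ : 0 ≤ ρ) (hρ1 : ρ ≤ 1) (hμ : 0 ≤ μ) (hν : 1 ≤ ν)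
    (hμν : μ ≤ θ * ν) (hρν : ρ * ν ≤ θ) (hθ1 : θ < 1) {g : (Fin d → ℝ) → (Fin d → ℝ)} {κ : ℝ}
    (hκ : 0 ≤ κ) (hg : ∀ x y, ‖g x - g y‖ ≤ κ * ‖x - y‖) (hg1 : ∀ x, ‖g x‖ ≤ 1)
    (hκK : κ * (K * (2 / (1 - θ))) ≤ 1 / 2) (n : ℕ) (w : Fin d → ℝ) (hw : P w = w) :
    ∃ v, ‖v - w‖ ≤ K * (2 / (1 - θ)) ∧ P ((fun x => a x + g x)^[n] v) = (a ^ n) w := by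
  have hK : 0 ≤ K := zero_le_one.trans h.one_le
  have hν0 : 0 < ν := zero_lt_one.trans_le hν
  have hθ : 0 ≤ θ := (mul_nonneg hρ hν0.le).trans hρν
  have hgreen := norm_greenKernel_apply_le h hρ hρ1 hμ hν hμν hρν
  let T : (Fin n → Fin d → ℝ) → (Fin n → Fin d → ℝ) := fun y j =>
    (ν ^ (j : ℕ))⁻¹ • ((a ^ (j : ℕ)) w +
      ∑ i : Fin n, greenKernel a b P j i (g (ν ^ (i : ℕ) • y i)))
  have hT : ContractingWith (1 / 2) T := by
    refine ⟨NNReal.half_lt_self one_ne_zero, LipschitzWith.of_dist_le_mul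
      fun y z => ?_⟩
    rw [dist_eq_norm, dist_eq_norm]
    refine (pi_norm_le_iff_of_nonneg (by positivity)).mpr fun j => ?_
    have hdiff : (T y - T z) j = (ν ^ (j : ℕ))⁻¹ • ∑ i : Fin n, greenKernel a b P j i
        (g (ν ^ (i : ℕ) • y i) - g (ν ^ (i : ℕ) • z i)) := by
      simp only [T, Pi.sub_apply, ← smul_sub, add_sub_add_left_eq_sub, ← Finset.sum_sub_distrib,
        map_sub]
    have hterm : ∀ i : Fin n, ‖greenKernel a b P j i
        (g (ν ^ (i : ℕ) • y i) - g (ν ^ (i : ℕ) • z i))‖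
        ≤ ν ^ (j : ℕ) * (geomWeight θ j i * (K * κ * ‖y - z‖)) := by
      intro i
      have hpos : 0 < ν ^ (i : ℕ) := pow_pos hν0 _
      have h1 := hgreen j i (g (ν ^ (i : ℕ) • y i) - g (ν ^ (i : ℕ) • z i))
      have h2 : ‖g (ν ^ (i : ℕ) • y i) - g (ν ^ (i : ℕ) • z i)‖
          ≤ κ * (ν ^ (i : ℕ) * ‖y - z‖) := by
        refine (hg _ _).trans ?_
        rw [← smul_sub, norm_smul, Real.norm_of_nonneg hpos.le]
        gcongr
        exact norm_le_pi_norm (y - z) i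
      have hwt : 0 ≤ geomWeight θ j i := by
        unfold geomWeight
        split_ifs <;> positivity
      refine le_of_mul_le_mul_right ?_ hpos
      calc _ ≤ _ := h1
        _ ≤ ν ^ (j : ℕ) * (K * geomWeight θ j i) * (κ * (ν ^ (i : ℕ) * ‖y - z‖)) := by gcongr
        _ = _ := by ring
    rw [hdiff, norm_smul, norm_inv, Real.norm_of_nonneg (pow_nonneg hν0.le _),
      inv_mul_le_iff₀ (pow_pos hν0 _)]
    calc _ ≤ ∑ i : Fin n, ν ^ (j : ℕ) * (geomWeight θ j i * (K * κ * ‖y - z‖)) :=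
          norm_sum_le_of_le _ fun i _ => hterm i
      _ = ν ^ (j : ℕ) * ((∑ i ∈ Finset.range n, geomWeight θ j i) * (K * κ * ‖y - z‖)) := by
          rw [← Finset.mul_sum, ← Finset.sum_mul,
            Fin.sum_univ_eq_sum_range (fun i => geomWeight θ j i) n]
      _ ≤ ν ^ (j : ℕ) * (2 / (1 - θ) * (K * κ * ‖y - z‖)) := by
          gcongr
          exact sum_geomWeight_le hθ hθ1 j n
      _ = ν ^ (j : ℕ) * (κ * (K * (2 / (1 - θ))) * ‖y - z‖) := by ring
      _ ≤ ν ^ (j : ℕ) * (1 / 2 * ‖y - z‖) := by gcongr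
      _ = _ := by simp
  obtain ⟨y, hy⟩ : ∃ y, T y = y := ⟨_, hT.fixedPoint_isFixedPt⟩
  set V : ℕ → Fin d → ℝ := fun j => (a ^ j) w +
    ∑ i : Fin n, greenKernel a b P j i (g (ν ^ (i : ℕ) • y i)) with hV
  have hVy : ∀ j : Fin n, V j = ν ^ (j : ℕ) • y j := by
    intro j
    have h1 : (ν ^ (j : ℕ))⁻¹ • V j = y j := congrFun hy j
    rw [← h1, smul_inv_smul₀ (pow_pos hν0 _).ne']
  have hstep : ∀ j < n, V (j + 1) = a (V j) + g (V j) := by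
    intro j hj
    have hgj : g (V j) = ∑ i : Fin n, if (i : ℕ) = j then g (ν ^ (i : ℕ) • y i) else 0 := by
      rw [Finset.sum_eq_single (⟨j, hj⟩ : Fin n), if_pos rfl, ← hVy ⟨j, hj⟩]
      · exact fun i _ hi => if_neg fun hij => hi (Fin.ext hij)
      · exact fun hj' => absurd (Finset.mem_univ _) hj'
    rw [hgj]
    simp only [hV, greenKernel_succ_apply h, Finset.sum_add_distrib, map_add, map_sum, pow_succ',
      Module.End.mul_apply, add_assoc]
  have hiter : ∀ j ≤ n, (fun x => a x + g x)^[j] (V 0) = V j := by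
    intro j
    induction j with
    | zero => simp
    | succ j ih =>
      intro hj
      rw [Function.iterate_succ_apply', ih (by omega), hstep j (by omega)]
  refine ⟨V 0, ?_, ?_⟩
  · have h0 : V 0 - w = ∑ i : Fin n, greenKernel a b P 0 i (g (ν ^ (i : ℕ) • y i)) := by
      simp [hV]
    rw [h0]
    calc _ ≤ ∑ i : Fin n, K * geomWeight θ 0 i := by
          refine norm_sum_le_of_le _ fun i _ => ?_
          have h1 := hgreen 0 i (g (ν ^ (i : ℕ) • y i))
          have hwt : 0 ≤ geomWeight θ 0 i := by
            unfold geomWeight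
            split_ifs <;> positivity
          calc _ ≤ _ := le_mul_of_one_le_right (norm_nonneg _) (one_le_pow₀ hν)
            _ ≤ _ := h1
            _ ≤ ν ^ 0 * (K * geomWeight θ 0 i) * 1 := by gcongr; exact hg1 _
            _ = _ := by ring
      _ = K * ∑ i ∈ Finset.range n, geomWeight θ 0 i := by
          rw [← Finset.mul_sum, Fin.sum_univ_eq_sum_range (fun i => geomWeight θ 0 i) n]
      _ ≤ K * (2 / (1 - θ)) := by
          gcongr
          exact sum_geomWeight_le hθ hθ1 0 n
  · have hPa : P ((a ^ n) w) = (a ^ n) w := by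
      have := LinearMap.congr_fun (h.comm.pow_left n).eq w
      rw [Module.End.mul_apply, Module.End.mul_apply, hw] at this
      exact this.symm
    rw [hiter n le_rfl, hV]
    simp only [map_add, map_sum, hPa]
    rw [Finset.sum_eq_zero fun i _ => proj_greenKernel_apply h i.2 _, add_zero]

theorem distQ_le {d : ℕ} (u w : Fin d → ℝ) (m : Fin d → ℤ) : distQ u w ≤ ‖u - w - latVec m‖ :=
  ciInf_le ⟨0, by rintro _ ⟨m, rfl⟩; exact norm_nonneg _⟩ m

theorem one_le_norm_latVec {d : ℕ} {m : Fin d → ℤ} (hm : m ≠ 0) : 1 ≤ ‖latVec m‖ := by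
  obtain ⟨i, hi⟩ := Function.ne_iff.mp hm
  refine le_trans ?_ (norm_le_pi_norm (latVec m) i)
  rw [latVec, Real.norm_eq_abs]
  exact_mod_cast Int.one_le_abs hi

/-- The projection of `ℝ^d` to its fundamental domain `[0,1)^d`. -/
noncomputable def fractVec {d : ℕ} (x : Fin d → ℝ) : Fin d → ℝ := fun i => Int.fract (x i)

theorem fractVec_add_latVec {d : ℕ} (x : Fin d → ℝ) :
    fractVec x + latVec (fun i => ⌊x i⌋) = x :=
  funext fun i => Int.fract_add_floor (x i)

theorem norm_fractVec_le {d : ℕ} (x : Fin d → ℝ) : ‖fractVec x‖ ≤ 1 := by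
  refine (pi_norm_le_iff_of_nonneg zero_le_one).mpr fun i => ?_
  rw [fractVec, Real.norm_of_nonneg (Int.fract_nonneg _)]
  exact (Int.fract_lt_one _).le

/-- `F` descends to a map of the torus. -/
def IsTorusLift {d : ℕ} (F : (Fin d → ℝ) → (Fin d → ℝ)) : Prop :=
  ∀ v (m : Fin d → ℤ), ∃ m' : Fin d → ℤ, F (v + latVec m) = F v + latVec m'

theorem IsTorusLift.iterate {d : ℕ} {F : (Fin d → ℝ) → (Fin d → ℝ)} (hF : IsTorusLift F) (j : ℕ) :
    IsTorusLift F^[j] := by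
  induction j with
  | zero => exact fun v m => ⟨m, rfl⟩
  | succ j ih =>
    intro v m
    obtain ⟨m₁, h₁⟩ := ih v m
    obtain ⟨m₂, h₂⟩ := hF (F^[j] v) m₁
    exact ⟨m₂, by rw [Function.iterate_succ_apply', Function.iterate_succ_apply', h₁, h₂]⟩

theorem IsTorusLift.distQ_le_norm_fractVec {d : ℕ} {F : (Fin d → ℝ) → (Fin d → ℝ)}
    (hF : IsTorusLift F) (x y : Fin d → ℝ) :
    distQ (F x) (F y) ≤ ‖F (fractVec x) - F (fractVec y)‖ := by
  obtain ⟨m, hm⟩ := hF (fractVec x) (fun i => ⌊x i⌋)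
  obtain ⟨k, hk⟩ := hF (fractVec y) (fun i => ⌊y i⌋)
  rw [fractVec_add_latVec] at hm hk
  refine (distQ_le _ _ (m - k)).trans (le_of_eq ?_)
  congr 1
  rw [hm, hk]
  ext i
  simp [latVec]
  ring

theorem isTorusLift_matR_mulVec_add {d : ℕ} (A : Matrix (Fin d) (Fin d) ℤ)
    {g : (Fin d → ℝ) → (Fin d → ℝ)} (hg : ∀ v (m : Fin d → ℤ), g (v + latVec m) = g v) :
    IsTorusLift fun v => Matrix.toLin' (matR A) v + g v := by
  intro v m
  refine ⟨A.mulVec m, ?_⟩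
  have h : (matR A).mulVec (latVec m) = latVec (A.mulVec m) := by
    ext i
    simp [Matrix.mulVec, dotProduct, matR, latVec]
  simp only [hg, map_add]
  rw [Matrix.toLin'_apply (matR A) (latVec m), h, add_right_comm]

/-- Pigeonhole principle: a bounded family of points of `ℝ^d` has a large subfamily of
diameter at most `h`. -/
theorem exists_subset_norm_sub_le {α : Type*} {d : ℕ} (S : Finset α) (f : α → Fin d → ℝ) {M h : ℝ}
    (hM : 0 ≤ M) (hh : 0 < h) (hf : ∀ x ∈ S, ‖f x‖ ≤ M) :
    ∃ T ⊆ S, (S.card : ℝ) ≤ (2 * M / h + 1) ^ d * T.card ∧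
      ∀ x ∈ T, ∀ y ∈ T, ‖f x - f y‖ ≤ h := by
  classical
  set N := ⌊2 * M / h⌋₊ + 1 with hN
  set t : Finset (Fin d → ℕ) := Fintype.piFinset fun _ => Finset.range N with ht
  set c : α → Fin d → ℕ := fun x i => ⌊(f x i + M) / h⌋₊ with hc
  have hcoord : ∀ x ∈ S, ∀ i, 0 ≤ f x i + M ∧ f x i + M ≤ 2 * M := by
    intro x hx i
    have h1 := (norm_le_pi_norm (f x) i).trans (hf x hx)
    rw [Real.norm_eq_abs, abs_le] at h1
    exact ⟨by linarith [h1.1], by linarith [h1.2]⟩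
  have hmaps : ∀ x ∈ S, c x ∈ t := by
    intro x hx
    rw [ht, Fintype.mem_piFinset]
    intro i
    rw [Finset.mem_range, hN, Nat.lt_succ_iff]
    exact Nat.floor_le_floor (div_le_div_of_nonneg_right (hcoord x hx i).2 hh.le)
  have htcard : t.card = N ^ d := by simp [ht]
  have htpos : (0 : ℝ) < t.card := by
    rw [htcard]
    exact_mod_cast pow_pos (Nat.succ_pos _) d
  obtain ⟨y, -, hy⟩ := Finset.exists_le_card_fiber_of_nsmul_le_card_of_maps_to
    (b := (S.card : ℝ) / t.card) hmaps (Finset.card_pos.mp (by exact_mod_cast htpos))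
    (by rw [nsmul_eq_mul, mul_div_cancel₀ _ htpos.ne'])
  refine ⟨S.filter fun x => c x = y, Finset.filter_subset _ _, ?_, ?_⟩
  · rw [div_le_iff₀ htpos, mul_comm] at hy
    refine hy.trans (mul_le_mul_of_nonneg_right ?_ (Nat.cast_nonneg _))
    rw [htcard, hN]
    push_cast
    gcongr
    exact Nat.floor_le (by positivity)
  · intro x hx z hz
    rw [Finset.mem_filter] at hx hz
    refine (pi_norm_le_iff_of_nonneg hh.le).mpr fun i => ?_
    have hfl : ⌊(f x i + M) / h⌋₊ = ⌊(f z i + M) / h⌋₊ := congrFun (hx.2.trans hz.2.symm) i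
    have key : ∀ u v : ℝ, 0 ≤ u → ⌊u⌋₊ = ⌊v⌋₊ → v - u ≤ 1 := by
      intro u v hu huv
      have h1 := Nat.floor_le hu
      have h2 := Nat.lt_floor_add_one v
      rw [← huv] at h2
      linarith
    have h1 := key _ _ (div_nonneg (hcoord x hx.1 i).1 hh.le) hfl
    have h2 := key _ _ (div_nonneg (hcoord z hz.1 i).1 hh.le) hfl.symm
    rw [← sub_div, div_le_iff₀ hh] at h1 h2
    rw [Pi.sub_apply, Real.norm_eq_abs, abs_le]
    exact ⟨by linarith, by linarith⟩

theorem norm_iterate_sub_le {d : ℕ} {F : (Fin d → ℝ) → (Fin d → ℝ)} {L : ℝ} (hL : 0 ≤ L)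
    (hLip : ∀ x y, ‖F x - F y‖ ≤ L * ‖x - y‖) (j : ℕ) (x y : Fin d → ℝ) :
    ‖F^[j] x - F^[j] y‖ ≤ L ^ j * ‖x - y‖ := by
  induction j with
  | zero => simp
  | succ j ih =>
    rw [Function.iterate_succ_apply', Function.iterate_succ_apply', pow_succ', mul_assoc]
    exact (hLip _ _).trans (mul_le_mul_of_nonneg_left ih hL)

theorem le_dynDist {X : Type*} (r : X → X → ℝ) (f : X → X) {n j : ℕ} (hj : j < n) (x y : X) :
    r (f^[j] x) (f^[j] y) ≤ dynDist r f n x y :=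
  le_ciSup (f := fun j : Fin n => r (f^[(j : ℕ)] x) (f^[(j : ℕ)] y))
    (Set.finite_range _).bddAbove ⟨j, hj⟩

theorem exists_lt_of_lt_dynDist {X : Type*} {r : X → X → ℝ} {f : X → X} {n : ℕ} {e : ℝ}
    (he : 0 ≤ e) {x y : X} (h : e < dynDist r f n x y) : ∃ j < n, e < r (f^[j] x) (f^[j] y) := by
  by_contra! hcon
  exact absurd (Real.iSup_le (fun j : Fin n => hcon j j.2) he) (not_le.mpr h)

theorem card_le_of_isSeparated {d : ℕ} {F : (Fin d → ℝ) → (Fin d → ℝ)} (hF : IsTorusLift F) {L : ℝ}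
    (hL : 1 ≤ L) (hLip : ∀ x y, ‖F x - F y‖ ≤ L * ‖x - y‖) {n : ℕ} {e : ℝ} (he : 0 < e)
    {S : Finset (Fin d → ℝ)} (hS : IsSeparated distQ F n e S) :
    (S.card : ℝ) ≤ ((2 / e + 1) * L ^ n) ^ d := by
  have hL0 : 0 < L := zero_lt_one.trans_le hL
  have hLn : 1 ≤ L ^ n := one_le_pow₀ hL
  obtain ⟨T, hTS, hcard, hT⟩ := exists_subset_norm_sub_le S fractVec zero_le_one
    (div_pos he (pow_pos hL0 n)) fun x _ => norm_fractVec_le x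
  have hT1 : T.card ≤ 1 := by
    refine Finset.card_le_one.mpr fun x hx y hy => ?_
    by_contra hxy
    obtain ⟨j, hj, hlt⟩ := exists_lt_of_lt_dynDist he.le (hS x (hTS hx) y (hTS hy) hxy)
    refine absurd hlt (not_lt.mpr ?_)
    calc _ ≤ _ := (hF.iterate j).distQ_le_norm_fractVec x y
      _ ≤ L ^ j * ‖fractVec x - fractVec y‖ := norm_iterate_sub_le hL0.le hLip j _ _
      _ ≤ L ^ n * (e / L ^ n) := by
          gcongr
          exact hT x hx y hy
      _ = e := by field_simp
  calc (S.card : ℝ) ≤ (2 * 1 / (e / L ^ n) + 1) ^ d * T.card := hcard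
    _ ≤ (2 * 1 / (e / L ^ n) + 1) ^ d * 1 := by
        gcongr
        exact_mod_cast hT1
    _ = (2 / e * L ^ n + 1) ^ d := by
        rw [mul_one]
        congr 2
        field_simp
    _ ≤ ((2 / e + 1) * L ^ n) ^ d := by
        gcongr
        nlinarith

theorem bddAbove_card_isSeparated {d : ℕ} {F : (Fin d → ℝ) → (Fin d → ℝ)} (hF : IsTorusLift F)
    {L : ℝ} (hL : 1 ≤ L) (hLip : ∀ x y, ‖F x - F y‖ ≤ L * ‖x - y‖) (n : ℕ) {e : ℝ} (he : 0 < e) :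
    BddAbove {k | ∃ S : Finset (Fin d → ℝ), IsSeparated distQ F n e S ∧ S.card = k} := by
  refine ⟨⌊((2 / e + 1) * L ^ n) ^ d⌋₊, ?_⟩
  rintro _ ⟨S, hS, rfl⟩
  exact Nat.le_floor (card_le_of_isSeparated hF hL hLip he hS)

theorem exists_card_eq_sepNum {d : ℕ} {F : (Fin d → ℝ) → (Fin d → ℝ)} (hF : IsTorusLift F)
    {L : ℝ} (hL : 1 ≤ L) (hLip : ∀ x y, ‖F x - F y‖ ≤ L * ‖x - y‖) (n : ℕ) {e : ℝ} (he : 0 < e) :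
    ∃ S : Finset (Fin d → ℝ), IsSeparated distQ F n e S ∧ S.card = sepNum distQ F n e :=
  Nat.sSup_mem (s := {k | ∃ S : Finset (Fin d → ℝ), IsSeparated distQ F n e S ∧ S.card = k})
    ⟨0, ∅, by simp [IsSeparated], rfl⟩ (bddAbove_card_isSeparated hF hL hLip n he)

theorem one_le_sepNum {d : ℕ} {F : (Fin d → ℝ) → (Fin d → ℝ)} (hF : IsTorusLift F)
    {L : ℝ} (hL : 1 ≤ L) (hLip : ∀ x y, ‖F x - F y‖ ≤ L * ‖x - y‖) (n : ℕ) {e : ℝ} (he : 0 < e) :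
    1 ≤ sepNum distQ F n e := by
  refine le_csSup (bddAbove_card_isSeparated hF hL hLip n he) ⟨{0}, ?_, rfl⟩
  intro x hx y hy hxy
  rw [Finset.mem_singleton] at hx hy
  exact absurd (hx.trans hy.symm) hxy

/-- Orbits that start close and stay close on the torus stay close in `ℝ^d`. -/
theorem norm_iterate_sub_le_of_distQ_le {d : ℕ} {F : (Fin d → ℝ) → (Fin d → ℝ)} {L : ℝ}
    (hL : 0 ≤ L) (hLip : ∀ x y, ‖F x - F y‖ ≤ L * ‖x - y‖) {n : ℕ} {x y : Fin d → ℝ}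
    (hxy : ‖x - y‖ ≤ 1 / (L + 1))
    (hd : ∀ j < n, distQ (F^[j] x) (F^[j] y) ≤ 1 / (2 * (L + 1))) :
    ∀ j < n, ‖F^[j] x - F^[j] y‖ ≤ 1 / (L + 1) := by
  intro j
  induction j with
  | zero => exact fun _ => hxy
  | succ j ih =>
    intro hj
    have hlt : 1 / (2 * (L + 1)) < 1 / (L + 1) := by
      apply one_div_lt_one_div_of_lt <;> linarith
    obtain ⟨m, hm⟩ := exists_lt_of_ciInf_lt ((hd (j + 1) hj).trans_lt hlt)
    have hstep : ‖F^[j + 1] x - F^[j + 1] y‖ ≤ L * (1 / (L + 1)) := by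
      rw [Function.iterate_succ_apply', Function.iterate_succ_apply']
      exact (hLip _ _).trans (mul_le_mul_of_nonneg_left (ih (by omega)) hL)
    have hm0 : m = 0 := by
      by_contra hne
      have h1 := one_le_norm_latVec hne
      have h2 : ‖latVec m‖ ≤ ‖F^[j + 1] x - F^[j + 1] y‖
          + ‖F^[j + 1] x - F^[j + 1] y - latVec m‖ := by
        simpa using norm_sub_le (F^[j + 1] x - F^[j + 1] y)
          (F^[j + 1] x - F^[j + 1] y - latVec m)
      have h3 : L * (1 / (L + 1)) + 1 / (L + 1) = 1 := by field_simp
      linarith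
    have hlat : latVec (0 : Fin d → ℤ) = 0 := by
      ext i
      simp [latVec]
    rw [hm0, hlat, sub_zero] at hm
    exact hm.le

theorem card_le_sepNum {d : ℕ} {F : (Fin d → ℝ) → (Fin d → ℝ)} (hF : IsTorusLift F)
    {L : ℝ} (hL : 1 ≤ L) (hLip : ∀ x y, ‖F x - F y‖ ≤ L * ‖x - y‖) (n : ℕ) {α : Type*}
    (T : Finset α) (v : α → Fin d → ℝ) {M : ℝ} (hM : 0 ≤ M) (hv : ∀ x ∈ T, ‖v x‖ ≤ M)
    (hsep : ∀ x ∈ T, ∀ y ∈ T, x ≠ y → 1 < ‖F^[n] (v x) - F^[n] (v y)‖) :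
    (T.card : ℝ) ≤ (2 * M * (L + 1) + 1) ^ d * sepNum distQ F (n + 1) (1 / (2 * (L + 1))) := by
  classical
  have hL1 : 0 < 1 / (L + 1) := by positivity
  obtain ⟨U, hUT, hcard, hU⟩ := exists_subset_norm_sub_le T v hM hL1 hv
  have hinj : Set.InjOn v U := by
    intro x hx y hy hxy
    by_contra hne
    have h1 := hsep x (hUT hx) y (hUT hy) hne
    rw [hxy, sub_self, norm_zero] at h1
    linarith
  have hUsep : IsSeparated distQ F (n + 1) (1 / (2 * (L + 1))) (U.image v) := by
    intro p hp q hq hpq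
    obtain ⟨x, hx, rfl⟩ := Finset.mem_image.mp hp
    obtain ⟨y, hy, rfl⟩ := Finset.mem_image.mp hq
    by_contra! hle
    have h1 := norm_iterate_sub_le_of_distQ_le (by linarith) hLip (hU x hx y hy)
      (fun j hj => (le_dynDist distQ F hj (v x) (v y)).trans hle) n n.lt_succ_self
    have h2 := hsep x (hUT hx) y (hUT hy) fun h => hpq (congrArg v h)
    have h3 : 1 / (L + 1) ≤ 1 := by
      rw [div_le_one (by positivity)]
      linarith
    linarith
  have hUcard : U.card ≤ sepNum distQ F (n + 1) (1 / (2 * (L + 1))) := by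
    rw [← Finset.card_image_of_injOn hinj]
    exact le_csSup (bddAbove_card_isSeparated hF hL hLip _ (by positivity)) ⟨_, hUsep, rfl⟩
  calc (T.card : ℝ) ≤ (2 * M / (1 / (L + 1)) + 1) ^ d * U.card := hcard
    _ = (2 * M * (L + 1) + 1) ^ d * U.card := by rw [div_div_eq_mul_div, div_one]
    _ ≤ _ := by gcongr

/-- Comparison of the separation numbers of a toral automorphism and of a perturbation. -/
theorem exists_sepNum_le {d : ℕ} {a b P : Module.End ℝ (Fin d → ℝ)} {ρ μ K ν θ : ℝ}
    (h : IsDominated a b P ρ μ K) (hρ : 0 ≤ ρ) (hρ1 : ρ ≤ 1) (hμ : 1 ≤ μ) (hν : 1 ≤ ν)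
    (hμν : μ ≤ θ * ν) (hρν : ρ * ν ≤ θ) (hθ1 : θ < 1) {g : (Fin d → ℝ) → (Fin d → ℝ)} {κ : ℝ}
    (hκ : 0 ≤ κ) (hg : ∀ x y, ‖g x - g y‖ ≤ κ * ‖x - y‖) (hg1 : ∀ x, ‖g x‖ ≤ 1)
    (hκK : κ * (K * (2 / (1 - θ))) ≤ 1 / 2) {L : ℝ} (hL : 1 ≤ L) (ha : IsTorusLift a)
    (haL : ∀ x y, ‖a x - a y‖ ≤ L * ‖x - y‖) (hF : IsTorusLift fun x => a x + g x)
    (hFL : ∀ x y, ‖(a x + g x) - (a y + g y)‖ ≤ L * ‖x - y‖) {e : ℝ} (he : 0 < e) :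
    ∃ C : ℝ, 0 < C ∧ ∀ n : ℕ, (sepNum distQ a (n + 1) e : ℝ)
      ≤ C * (μ ^ n) ^ d * sepNum distQ (fun x => a x + g x) (n + 1) (1 / (2 * (L + 1))) := by
  have hK1 := h.one_le
  have hK : 0 < K := zero_lt_one.trans_le hK1
  set D := K * (2 / (1 - θ)) with hD
  have hD0 : 0 ≤ D := mul_nonneg hK.le (div_nonneg zero_le_two (by linarith))
  have hPK : ∀ x, ‖P x‖ ≤ K * ‖x‖ := fun x => by simpa using h.unstable 0 x
  -- points of the range of `P` that `a ^ n` separates by `e / (2 * K)` are rescaled by `R`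
  set R := 2 * K * (K + 1) / e with hR
  have hR0 : 0 < R := by positivity
  set M := R * K + D with hM
  have hM0 : 0 ≤ M := by positivity
  refine ⟨(4 * K / e + 1) ^ d * (2 * M * (L + 1) + 1) ^ d, by positivity, fun n => ?_⟩
  have hμn : 1 ≤ μ ^ n := one_le_pow₀ hμ
  obtain ⟨S, hS, hScard⟩ := exists_card_eq_sepNum ha hL haL (n + 1) he
  have hh : 0 < e / (2 * K * μ ^ n) := by positivity
  obtain ⟨T, hTS, hcard, hT⟩ := exists_subset_norm_sub_le S fractVec zero_le_one hh
    fun x _ => norm_fractVec_le x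
  have hsep : ∀ x ∈ T, ∀ y ∈ T, x ≠ y →
      e < 2 * K * ‖(a ^ n) (P (fractVec x - fractVec y))‖ := by
    intro x hx y hy hxy
    obtain ⟨j, hj, hlt⟩ := exists_lt_of_lt_dynDist he.le (hS x (hTS hx) y (hTS hy) hxy)
    have h1 := hlt.trans_le ((ha.iterate j).distQ_le_norm_fractVec x y)
    rw [← Module.End.coe_pow, ← map_sub] at h1
    set z := fractVec x - fractVec y
    have hz : ‖z‖ ≤ e / (2 * K * μ ^ n) := hT x hx y hy
    have hjn : j ≤ n := Nat.lt_succ_iff.mp hj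
    have hcs : ‖(a ^ j) (z - P z)‖ ≤ e / 2 := by
      calc _ ≤ K * μ ^ j * ‖z‖ := h.centerStable j z
        _ ≤ K * μ ^ n * (e / (2 * K * μ ^ n)) := by gcongr
        _ = e / 2 := by field_simp
    have hu : (a ^ j) (P z) = (b ^ (n - j)) (P ((a ^ n) (P z))) := by
      have hmul : b ^ (n - j) * P * (a ^ n * P) = a ^ j * P := by
        have hcomm : Commute b a := h.inv_mul.trans h.mul_inv.symm
        obtain ⟨k, rfl⟩ : ∃ k, n = k + j := ⟨n - j, by omega⟩
        rw [Nat.add_sub_cancel, mul_assoc, ← mul_assoc P, ← (h.comm.pow_left (k + j)).eq,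
          mul_assoc (a ^ (k + j)), h.idem, pow_add, mul_assoc (a ^ k), ← mul_assoc,
          ← hcomm.mul_pow, h.inv_mul, one_pow, one_mul]
      exact (LinearMap.congr_fun hmul z).symm
    have hub : ‖(a ^ j) (P z)‖ ≤ K * ‖(a ^ n) (P z)‖ := by
      rw [hu]
      refine (h.unstable _ _).trans ?_
      gcongr
      exact mul_le_of_le_one_right hK.le (pow_le_one₀ hρ hρ1)
    have hsum : ‖(a ^ j) z‖ ≤ ‖(a ^ j) (P z)‖ + ‖(a ^ j) (z - P z)‖ := by
      refine le_trans (le_of_eq ?_) (norm_add_le _ _)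
      rw [← map_add, add_sub_cancel]
    linarith
  have hPw : ∀ x, P (R • P (fractVec x)) = R • P (fractVec x) := fun x => by
    rw [map_smul]
    exact congrArg (R • ·) (LinearMap.congr_fun h.idem (fractVec x))
  choose v hvw hvP using fun x : Fin d → ℝ => exists_proj_iterate_eq h hρ hρ1
    (zero_le_one.trans hμ) hν hμν hρν hθ1 hκ hg hg1 hκK n (R • P (fractVec x)) (hPw x)
  have hvM : ∀ x ∈ T, ‖v x‖ ≤ M := by
    intro x _
    have h1 : ‖v x‖ ≤ ‖R • P (fractVec x)‖ + ‖v x - R • P (fractVec x)‖ := by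
      simpa using norm_add_le (R • P (fractVec x)) (v x - R • P (fractVec x))
    have h2 : ‖R • P (fractVec x)‖ ≤ R * K := by
      rw [norm_smul, Real.norm_of_nonneg hR0.le]
      gcongr
      exact (hPK _).trans (mul_le_of_le_one_right hK.le (norm_fractVec_le x))
    exact h1.trans (add_le_add h2 (hvw x))
  have hvsep : ∀ x ∈ T, ∀ y ∈ T, x ≠ y →
      1 < ‖(fun x => a x + g x)^[n] (v x) - (fun x => a x + g x)^[n] (v y)‖ := by
    intro x hx y hy hxy
    have h1 := hPK ((fun x => a x + g x)^[n] (v x) - (fun x => a x + g x)^[n] (v y))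
    rw [map_sub, hvP, hvP, ← map_sub, ← smul_sub, ← map_sub, map_smul, norm_smul,
      Real.norm_of_nonneg hR0.le] at h1
    have h2 : K + 1 < R * ‖(a ^ n) (P (fractVec x - fractVec y))‖ := by
      rw [hR, div_mul_eq_mul_div, lt_div_iff₀ he]
      have := hsep x hx y hy hxy
      nlinarith
    by_contra! hle
    nlinarith
  have hTcard := card_le_sepNum hF hL hFL n T v hM0 hvM hvsep
  rw [← hScard]
  calc (S.card : ℝ) ≤ (2 * 1 / (e / (2 * K * μ ^ n)) + 1) ^ d * T.card := hcard
    _ = (4 * K / e * μ ^ n + 1) ^ d * T.card := by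
        congr 2
        field_simp
        ring
    _ ≤ ((4 * K / e + 1) * μ ^ n) ^ d * ((2 * M * (L + 1) + 1) ^ d *
          sepNum distQ (fun x => a x + g x) (n + 1) (1 / (2 * (L + 1)))) := by
        gcongr
        linarith
    _ = _ := by
        rw [mul_pow]
        ring

theorem eventually_log_sepNum_div_le {d : ℕ} {F : (Fin d → ℝ) → (Fin d → ℝ)} (hF : IsTorusLift F)
    {L : ℝ} (hL : 1 ≤ L) (hLip : ∀ x y, ‖F x - F y‖ ≤ L * ‖x - y‖) {e : ℝ} (he : 0 < e) :
    ∀ᶠ n : ℕ in atTop, Real.log (sepNum distQ F n e) / n ≤ d * Real.log L + 1 := by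
  have hlim : Tendsto (fun n : ℕ => d * Real.log (2 / e + 1) / (n : ℝ)) atTop (nhds 0) :=
    tendsto_const_div_atTop_nhds_zero_nat _
  filter_upwards [hlim.eventually (gt_mem_nhds zero_lt_one), eventually_gt_atTop 0] with n hn hn0
  have hn0' : (0 : ℝ) < n := by exact_mod_cast hn0
  have hL0 : 0 < L := zero_lt_one.trans_le hL
  obtain ⟨S, hS, hScard⟩ := exists_card_eq_sepNum hF hL hLip n he
  have hpos : (0 : ℝ) < sepNum distQ F n e := by exact_mod_cast one_le_sepNum hF hL hLip n he
  have hle : (sepNum distQ F n e : ℝ) ≤ ((2 / e + 1) * L ^ n) ^ d := by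
    rw [← hScard]
    exact card_le_of_isSeparated hF hL hLip he hS
  have hlog := Real.log_le_log hpos hle
  rw [Real.log_pow, Real.log_mul (by positivity) (by positivity), Real.log_pow] at hlog
  rw [div_lt_one hn0'] at hn
  rw [div_le_iff₀ hn0']
  linarith

theorem limsup_log_sepNum_le_topEnt {d : ℕ} {F : (Fin d → ℝ) → (Fin d → ℝ)} (hF : IsTorusLift F)
    {L : ℝ} (hL : 1 ≤ L) (hLip : ∀ x y, ‖F x - F y‖ ≤ L * ‖x - y‖) {e : ℝ} (he : 0 < e) :
    limsup (fun n : ℕ => Real.log (sepNum distQ F n e) / n) atTop ≤ topEnt distQ F := by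
  refine le_ciSup (f := fun e : {e : ℝ // 0 < e} =>
    limsup (fun n : ℕ => Real.log (sepNum distQ F n e) / n) atTop)
    ⟨d * Real.log L + 1, ?_⟩ ⟨e, he⟩
  rintro _ ⟨e, rfl⟩
  exact limsup_le_of_le
    (isCoboundedUnder_le_of_le atTop (x := 0) fun n =>
      div_nonneg (Real.log_natCast_nonneg _) (Nat.cast_nonneg _))
    (eventually_log_sepNum_div_le hF hL hLip e.2)

/-- An exponential comparison of separation numbers bounds the exponential growth rates. -/
theorem limsup_log_div_le_add {u w : ℕ → ℕ} (hw : ∀ n, 1 ≤ w n) {C s B : ℝ}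
    (hC : 0 < C) (hs : 0 ≤ s) (huw : ∀ n, (u (n + 1) : ℝ) ≤ C * Real.exp (n * s) * w (n + 1))
    (hB : ∀ᶠ n : ℕ in atTop, Real.log (w n) / n ≤ B) :
    limsup (fun n : ℕ => Real.log (u n) / n) atTop
      ≤ limsup (fun n : ℕ => Real.log (w n) / n) atTop + s := by
  have hcob : ∀ x : ℕ → ℕ, IsCoboundedUnder (· ≤ ·) atTop fun n : ℕ => Real.log (x n) / n :=
    fun x => isCoboundedUnder_le_of_le atTop (x := 0) fun n =>
      div_nonneg (Real.log_natCast_nonneg _) (Nat.cast_nonneg _)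
  refine le_of_forall_pos_le_add fun t ht => ?_
  refine limsup_le_of_le (hcob u) ?_
  have hlim : Tendsto (fun n : ℕ => |Real.log C| / (n : ℝ)) atTop (nhds 0) :=
    tendsto_const_div_atTop_nhds_zero_nat _
  have hevw : ∀ᶠ n : ℕ in atTop, Real.log (w n) / n
      < limsup (fun n : ℕ => Real.log (w n) / n) atTop + t / 2 :=
    eventually_lt_of_limsup_lt (by linarith) (isBoundedUnder_of_eventually_le hB)
  filter_upwards [hlim.eventually (gt_mem_nhds (half_pos ht)), hevw, eventually_gt_atTop 0]
    with n hn hwn hn0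
  obtain ⟨m, rfl⟩ : ∃ m, n = m + 1 := ⟨n - 1, by omega⟩
  have hn0' : (0 : ℝ) < (m + 1 : ℕ) := by exact_mod_cast hn0
  have hwpos : (0 : ℝ) < w (m + 1) := by exact_mod_cast hw (m + 1)
  have hlog : Real.log (u (m + 1)) ≤ |Real.log C| + (m + 1 : ℕ) * s + Real.log (w (m + 1)) := by
    rcases Nat.eq_zero_or_pos (u (m + 1)) with h0 | h0
    · have := Real.log_natCast_nonneg (w (m + 1))
      rw [h0, Nat.cast_zero, Real.log_zero]
      positivity
    · have h1 := Real.log_le_log (by exact_mod_cast h0) (huw m)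
      rw [Real.log_mul (by positivity) (by positivity), Real.log_mul (by positivity) (by positivity),
        Real.log_exp] at h1
      have h2 := le_abs_self (Real.log C)
      push_cast
      linarith
  rw [div_lt_iff₀ hn0'] at hn hwn
  rw [div_le_iff₀ hn0']
  linarith

/-- lower semicontinuity of topological entropy at ergodic toral
automorphisms in the `C¹` topology. Let `A ∈ GL(d,ℤ)` be ergodic. For every `ε > 0`
there is `η > 0` such that for every `C¹`, `ℤ^d`-periodic `g : ℝ^d → ℝ^d` of `C¹`-size
`< η` for which `F = A + g` is a `C¹` diffeomorphism of `ℝ^d`, the induced torus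
homeomorphism `f` (computed on the lift `F`, with the quotient pseudometric `distQ`)
satisfies `h_top(f) ≥ h_top(T_A) − ε`. -/
theorem statement5 {d : ℕ} (hd : 2 ≤ d) (A : Matrix (Fin d) (Fin d) ℤ)
    (hdet : A.det = 1 ∨ A.det = -1) (herg : IsErgodicMatrix A) :
    ∀ ε : ℝ, 0 < ε → ∃ η : ℝ, 0 < η ∧
      ∀ g : (Fin d → ℝ) → (Fin d → ℝ),
        ContDiff ℝ 1 g →
        (∀ (v : Fin d → ℝ) (m : Fin d → ℤ), g (v + latVec m) = g v) →
        (∀ v : Fin d → ℝ, ‖g v‖ + ‖fderiv ℝ g v‖ < η) →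
        Function.Bijective (fun v => (matR A).mulVec v + g v) →
        ContDiff ℝ 1 (Function.invFun (fun v => (matR A).mulVec v + g v)) →
        topEnt distQ (fun v => (matR A).mulVec v + g v) ≥
          topEnt distQ (fun v => (matR A).mulVec v) - ε := by
  intro ε hε
  obtain ⟨b, ρ, hρ, hρ1, hsplit⟩ := exists_isDominated A hdet
  obtain ⟨μ, ⟨hρμ, hlogμ⟩, hμ⟩ : ∃ μ : ℝ, (ρ * μ ^ 2 < 1 ∧ d * Real.log μ < ε) ∧ 1 < μ := by
    have h1 : ∀ᶠ μ in nhds (1 : ℝ), ρ * μ ^ 2 < 1 :=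
      ContinuousAt.eventually_lt (by fun_prop) continuousAt_const (by simpa using hρ1)
    have h2 : ∀ᶠ μ in nhds (1 : ℝ), d * Real.log μ < ε :=
      ContinuousAt.eventually_lt (continuousAt_const.mul (Real.continuousAt_log one_ne_zero))
        continuousAt_const (by simpa using hε)
    exact (((h1.and h2).filter_mono nhdsWithin_le_nhds).and
      (self_mem_nhdsWithin (s := Set.Ioi (1 : ℝ)))).exists
  have hμ0 : 0 < μ := zero_lt_one.trans hμ
  obtain ⟨P, K, h⟩ := hsplit μ hμ (by nlinarith)
  set θ := max μ⁻¹ (ρ * μ ^ 2)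
  have hθ1 : θ < 1 := max_lt (inv_lt_one_of_one_lt₀ hμ) hρμ
  have hμθ : μ ≤ θ * μ ^ 2 := by
    calc μ = μ⁻¹ * μ ^ 2 := by field_simp
      _ ≤ θ * μ ^ 2 := by gcongr; exact le_max_left _ _
  have hD : 0 < K * (2 / (1 - θ)) :=
    mul_pos (zero_lt_one.trans_le h.one_le) (div_pos two_pos (by linarith))
  set D := K * (2 / (1 - θ))
  set a := Matrix.toLin' (matR A)
  refine ⟨min 1 (1 / (2 * D)), by positivity, fun g hg hper hsmall _ _ => ?_⟩
  set κ := min 1 (1 / (2 * D))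
  have hκ : 0 ≤ κ := by positivity
  have hκ1 : κ ≤ 1 := min_le_left _ _
  have hκD : κ * D ≤ 1 / 2 := by
    calc κ * D ≤ 1 / (2 * D) * D := by gcongr; exact min_le_right _ _
      _ = 1 / 2 := by field_simp
  have hg1 : ∀ x, ‖g x‖ ≤ 1 := fun x => by
    linarith [hsmall x, norm_nonneg (fderiv ℝ g x)]
  have hgL : ∀ x y, ‖g x - g y‖ ≤ κ * ‖x - y‖ := fun x y =>
    convex_univ.norm_image_sub_le_of_norm_fderiv_le
      (fun z _ => (hg.differentiable one_ne_zero).differentiableAt)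
      (fun z _ => by linarith [hsmall z, norm_nonneg (g z)]) (Set.mem_univ y) (Set.mem_univ x)
  set L := ‖LinearMap.toContinuousLinearMap a‖ + 1 with hLdef
  have hL : 1 ≤ L := le_add_of_nonneg_left (norm_nonneg _)
  have haN : ∀ x y, ‖a x - a y‖ ≤ ‖LinearMap.toContinuousLinearMap a‖ * ‖x - y‖ := fun x y => by
    rw [← map_sub]
    exact ContinuousLinearMap.le_opNorm (LinearMap.toContinuousLinearMap a) _
  have haL : ∀ x y, ‖a x - a y‖ ≤ L * ‖x - y‖ := fun x y =>
    (haN x y).trans (by gcongr; linarith)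
  have hFL : ∀ x y, ‖(a x + g x) - (a y + g y)‖ ≤ L * ‖x - y‖ := fun x y => by
    rw [add_sub_add_comm]
    refine (norm_add_le _ _).trans ?_
    rw [hLdef, add_mul]
    refine add_le_add (haN x y) ((hgL x y).trans ?_)
    gcongr
  have haT : IsTorusLift a := by
    simpa only [add_zero] using isTorusLift_matR_mulVec_add A (g := fun _ => 0) fun _ _ => rfl
  have hFT : IsTorusLift fun x => a x + g x := isTorusLift_matR_mulVec_add A hper
  change topEnt distQ (fun x => a x + g x) ≥ topEnt distQ a - ε
  rw [ge_iff_le, sub_le_iff_le_add]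
  have : Nonempty {e : ℝ // 0 < e} := ⟨⟨1, one_pos⟩⟩
  refine ciSup_le fun e => ?_
  obtain ⟨C, hC, hcomp⟩ := exists_sepNum_le h hρ.le hρ1.le hμ.le (one_le_pow₀ hμ.le) hμθ
    (le_max_right _ _) hθ1 hκ hgL hg1 hκD hL haT haL hFT hFL e.2
  have he' : 0 < 1 / (2 * (L + 1)) := by positivity
  have hexp : ∀ n : ℕ, (μ ^ n) ^ d = Real.exp (n * (d * Real.log μ)) := fun n => by
    rw [← mul_assoc, mul_comm, Real.exp_mul, Real.exp_log hμ0, ← Nat.cast_mul,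
      Real.rpow_natCast, pow_mul]
  have hlim := limsup_log_div_le_add (u := fun n => sepNum distQ a n e)
    (fun n => one_le_sepNum hFT hL hFL n he') hC
    (mul_nonneg (Nat.cast_nonneg d) (Real.log_nonneg hμ.le))
    (fun n => by rw [← hexp]; exact hcomp n) (eventually_log_sepNum_div_le hFT hL hFL he')
  linarith [limsup_log_sepNum_le_topEnt hFT hL hFL he']

end Paper
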